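/- arXiv:1609.08743 — 2 statements merged into one kernel-verified Lean document; each statement's English description precedes it below -/
import Mathlib

section
/- Let a₀ ∈ (0,1) be the minimal root of 4a(2−a)(1−a)²(a²−2a+2)² = 1. Let a ∈ [a₀, 1), let c, d > 0 with 0 < c/d ≤ ((a−1)² + 1)/(2(a−1)² + 1), and let δ₂ = (√(c/d) − 1)(1−a). Then for all x ∈ (0,1) and all δ ∈ (a−1, δ₂], F(a−1, 1−a; 1; 1−x^c) + C₃(δ)(1−x^c) < F(a−1−δ, 1−a+δ; 1; 1−x^d) < F(a−1, 1−a; 1; 1−x^c) + C₄(δ)(1−x^c), where C₃(δ) = −(d/c)·(δ² + 2(1−a)δ + (1−a)²(1 − c/d)) and C₄(δ) = (1/π)·[sin(π(a−δ))/(1−a+δ) − sin(πa)/(1−a)]. -/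
open Real Set Filter Topology

/-- The Gaussian hypergeometric function `F(a,b;c;x)`, defined as a power series
with Pochhammer (shifted factorial) coefficients. -/
noncomputable def hyp (a b c x : ℝ) : ℝ :=
  ∑' n : ℕ, ((∏ i ∈ Finset.range n, (a + i)) * (∏ i ∈ Finset.range n, (b + i)) /
    ((∏ i ∈ Finset.range n, (c + i)) * (Nat.factorial n))) * x ^ n


/-! ### Power series with bounded coefficients -/

theorem summable_bounded_mul_pow {a : ℕ → ℝ} (ha : ∀ n, |a n| ≤ 1) {y : ℝ} (hy : |y| < 1) :
    Summable fun n => a n * y ^ n := by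
  refine Summable.of_norm_bounded (summable_geometric_of_lt_one (abs_nonneg y) hy) fun n => ?_
  rw [norm_mul, norm_pow, Real.norm_eq_abs, Real.norm_eq_abs]
  exact mul_le_of_le_one_left (by positivity) (ha n)

theorem summable_nat_mul_bounded_mul_pow {a : ℕ → ℝ} (ha : ∀ n, |a n| ≤ 1) {y : ℝ}
    (hy : |y| < 1) : Summable fun n : ℕ => n * a n * y ^ n := by
  have h := summable_pow_mul_geometric_of_norm_lt_one (R := ℝ) 1 (r := |y|) (by simpa using hy)
  refine Summable.of_norm_bounded h fun n => ?_
  rw [norm_mul, norm_mul, norm_pow, Real.norm_eq_abs, Real.norm_eq_abs, Real.norm_eq_abs,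
    Nat.abs_cast, pow_one]
  gcongr
  exact mul_le_of_le_one_right (by positivity) (ha n)

theorem hasDerivAt_tsum_mul_pow {a : ℕ → ℝ} (ha : ∀ n, |a n| ≤ 1) {y : ℝ} (hy : |y| < 1) :
    HasDerivAt (fun y => ∑' n, a n * y ^ n) (∑' n : ℕ, n * a n * y ^ (n - 1)) y := by
  obtain ⟨r, hyr, hr⟩ := exists_between hy
  have hr0 : 0 < r := (abs_nonneg y).trans_lt hyr
  have hsum : Summable fun n : ℕ => (n : ℝ) * r ^ (n - 1) := by
    have h := summable_pow_mul_geometric_of_norm_lt_one (R := ℝ) 1 (r := r)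
      (by rwa [Real.norm_eq_abs, abs_of_pos hr0])
    refine (h.mul_left r⁻¹).congr fun n => ?_
    rcases n with _ | n
    · simp
    · simp only [Nat.add_sub_cancel, pow_succ]
      field_simp
  refine hasDerivAt_tsum_of_isPreconnected (t := Metric.ball 0 r) (y₀ := y) hsum Metric.isOpen_ball
    (convex_ball 0 r).isPreconnected (g := fun n y => a n * y ^ n)
    (g' := fun n y => n * a n * y ^ (n - 1)) (fun n w _ => ?_) (fun n w hw => ?_)
    (by simpa using hyr) (summable_bounded_mul_pow ha hy) (by simpa using hyr)
  · exact ((hasDerivAt_pow n w).const_mul (a n)).congr_deriv (by ring)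
  · have hw : |w| ≤ r := by simpa using (mem_ball_zero_iff.1 hw).le
    rw [norm_mul, norm_mul, norm_pow, Real.norm_eq_abs, Real.norm_eq_abs, Real.norm_eq_abs,
      Nat.abs_cast]
    gcongr
    exact mul_le_of_le_one_right (by positivity) (ha n)

theorem tsum_deriv_eq {a : ℕ → ℝ} (ha : ∀ n, |a n| ≤ 1) {y : ℝ} (hy : |y| < 1) :
    ∑' n : ℕ, n * a n * y ^ (n - 1) = ∑' n : ℕ, ((n + 1) * a (n + 1)) * y ^ n := by
  have hs : Summable fun n : ℕ => n * a n * y ^ (n - 1) := by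
    by_cases h0 : y = 0
    · refine summable_of_ne_finset_zero (s := {1}) fun n hn => ?_
      rcases n with _ | _ | n
      · simp
      · simp at hn
      · simp [h0]
    · refine ((summable_nat_mul_bounded_mul_pow ha hy).mul_left y⁻¹).congr fun n => ?_
      rcases n with _ | n
      · simp
      · simp only [Nat.add_sub_cancel, pow_succ]
        field_simp
  rw [hs.tsum_eq_zero_add]
  simp

theorem one_sub_mul_tsum_deriv {a : ℕ → ℝ} (ha : ∀ n, |a n| ≤ 1) {y : ℝ} (hy : |y| < 1) :
    (1 - y) * ∑' n : ℕ, n * a n * y ^ (n - 1) =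
      ∑' n : ℕ, ((n + 1) * a (n + 1) - n * a n) * y ^ n := by
  have h1 := summable_nat_mul_bounded_mul_pow ha hy
  have h2 : y * ∑' n : ℕ, n * a n * y ^ (n - 1) = ∑' n : ℕ, n * a n * y ^ n := by
    rw [← tsum_mul_left]
    refine tsum_congr fun n => ?_
    rcases n with _ | n
    · simp
    · simp only [Nat.add_sub_cancel, pow_succ]
      ring
  have h3 : Summable fun n : ℕ => ((n + 1) * a (n + 1)) * y ^ n := by
    by_cases h0 : y = 0
    · refine summable_of_ne_finset_zero (s := {0}) fun n hn => ?_
      rcases n with _ | n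
      · simp at hn
      · simp [h0]
    · refine (((summable_nat_add_iff 1).2 h1).mul_left y⁻¹).congr fun n => ?_
      simp only [Nat.cast_add, Nat.cast_one, pow_succ]
      field_simp
  rw [one_sub_mul, h2, tsum_deriv_eq ha hy, ← h3.tsum_sub h1]
  exact tsum_congr fun n => by ring

theorem tsum_chebyshev {w θ r : ℕ → ℝ} (hw : ∀ n, 0 ≤ w n) (hθ : Monotone θ) (hr : Monotone r)
    (h0 : Summable w) (h1 : Summable fun n => w n * θ n) (h2 : Summable fun n => w n * r n)
    (h3 : Summable fun n => w n * θ n * r n) :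
    (∑' n, w n * θ n) * (∑' n, w n * r n) ≤ (∑' n, w n * θ n * r n) * ∑' n, w n := by
  refine le_of_tendsto_of_tendsto'
    (h1.hasSum.tendsto_sum_nat.mul h2.hasSum.tendsto_sum_nat)
    (h3.hasSum.tendsto_sum_nat.mul h0.hasSum.tendsto_sum_nat) fun N => ?_
  have key : 0 ≤ ∑ i ∈ Finset.range N, ∑ j ∈ Finset.range N,
      w i * w j * ((θ i - θ j) * (r i - r j)) := by
    refine Finset.sum_nonneg fun i _ => Finset.sum_nonneg fun j _ =>
      mul_nonneg (mul_nonneg (hw i) (hw j)) ?_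
    rcases le_total i j with h | h
    · exact mul_nonneg_of_nonpos_of_nonpos (sub_nonpos.2 (hθ h)) (sub_nonpos.2 (hr h))
    · exact mul_nonneg (sub_nonneg.2 (hθ h)) (sub_nonneg.2 (hr h))
  have expand : ∑ i ∈ Finset.range N, ∑ j ∈ Finset.range N,
      w i * w j * ((θ i - θ j) * (r i - r j)) =
      2 * ((∑ i ∈ Finset.range N, w i * θ i * r i) * ∑ j ∈ Finset.range N, w j -
        (∑ i ∈ Finset.range N, w i * θ i) * ∑ j ∈ Finset.range N, w j * r j) := by
    have e1 : ∀ i j, w i * w j * ((θ i - θ j) * (r i - r j)) =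
        (w i * θ i * r i) * w j + w i * (w j * θ j * r j)
          - (w i * θ i) * (w j * r j) - (w i * r i) * (w j * θ j) := fun i j => by ring
    simp only [e1, Finset.sum_sub_distrib, Finset.sum_add_distrib, ← Finset.sum_mul_sum]
    ring
  linarith

/-! ### The products `∏ (1 - z / i ^ 2)` and the associated series -/

/-- The partial products of Euler's sine product, as a function of `z = p ^ 2`. -/
noncomputable def eulerProd (z : ℝ) (n : ℕ) : ℝ :=
  ∏ i ∈ Finset.range n, (1 - z / ((i : ℝ) + 1) ^ 2)

theorem eulerProd_succ (z : ℝ) (n : ℕ) :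
    eulerProd z (n + 1) = eulerProd z n * (1 - z / ((n : ℝ) + 1) ^ 2) :=
  Finset.prod_range_succ _ _

theorem eulerProd_zero_left (n : ℕ) : eulerProd 0 n = 1 := by simp [eulerProd]

theorem eulerProd_zero_right (z : ℝ) : eulerProd z 0 = 1 := by simp [eulerProd]

theorem eulerProd_factor_pos {z : ℝ} (hz : z < 1) (n : ℕ) : 0 < 1 - z / ((n : ℝ) + 1) ^ 2 := by
  have : (1 : ℝ) ≤ ((n : ℝ) + 1) ^ 2 := one_le_pow₀ (by linarith [n.cast_nonneg (α := ℝ)])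
  rw [sub_pos, div_lt_one (by positivity)]
  linarith

theorem eulerProd_pos {z : ℝ} (hz : z < 1) (n : ℕ) : 0 < eulerProd z n :=
  Finset.prod_pos fun i _ => eulerProd_factor_pos hz i

theorem eulerProd_antitone {z : ℝ} (hz0 : 0 ≤ z) (hz : z < 1) : Antitone (eulerProd z) :=
  antitone_nat_of_succ_le fun n => by
    rw [eulerProd_succ]
    exact mul_le_of_le_one_right (eulerProd_pos hz n).le (sub_le_self _ (by positivity))

theorem eulerProd_le_one {z : ℝ} (hz0 : 0 ≤ z) (hz : z < 1) (n : ℕ) : eulerProd z n ≤ 1 :=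
  eulerProd_zero_right z ▸ eulerProd_antitone hz0 hz n.zero_le

/-- Coefficients of `F(-p, p; 1; y)` in terms of `z = p ^ 2`. -/
noncomputable def coeffG (z : ℝ) : ℕ → ℝ
  | 0 => 1
  | n + 1 => -z * eulerProd z n / ((n : ℝ) + 1) ^ 2

/-- Coefficients of `F(1 - p, 1 + p; 2; y)` in terms of `z = p ^ 2`. -/
noncomputable def coeffH (z : ℝ) (n : ℕ) : ℝ := eulerProd z n / (n + 1)

/-- Coefficients of `F(1 - p, 1 + p; 3; y) / 2` in terms of `z = p ^ 2`. -/
noncomputable def coeffS (z : ℝ) (n : ℕ) : ℝ := eulerProd z n / ((n + 1) * (n + 2))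

/-- Coefficients of `S - (1 - y) S'`, where `S` is the series with coefficients `coeffS z`. -/
noncomputable def coeffT (z : ℝ) (n : ℕ) : ℝ := coeffS z n * ((2 * n + 2 + z) / (n + 3))

theorem abs_coeffG_le {z : ℝ} (hz0 : 0 ≤ z) (hz : z < 1) (n : ℕ) :
    |coeffG z (n + 1)| ≤ 1 / ((n : ℝ) + 1) ^ 2 := by
  have h0 := (eulerProd_pos hz n).le
  have h1 := eulerProd_le_one hz0 hz n
  rw [coeffG, abs_div, abs_mul, abs_neg, abs_of_nonneg hz0, abs_of_nonneg h0,
    abs_of_pos (by positivity : (0 : ℝ) < ((n : ℝ) + 1) ^ 2)]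
  gcongr
  exact mul_le_one₀ hz.le h0 h1

theorem abs_coeffG_le_one {z : ℝ} (hz0 : 0 ≤ z) (hz : z < 1) (n : ℕ) : |coeffG z n| ≤ 1 := by
  rcases n with _ | n
  · simp [coeffG]
  · refine (abs_coeffG_le hz0 hz n).trans ?_
    rw [div_le_one (by positivity)]
    exact one_le_pow₀ (by linarith [n.cast_nonneg (α := ℝ)])

theorem coeffS_pos {z : ℝ} (hz : z < 1) (n : ℕ) : 0 < coeffS z n :=
  div_pos (eulerProd_pos hz n) (by positivity)

theorem abs_coeffH_le_one {z : ℝ} (hz0 : 0 ≤ z) (hz : z < 1) (n : ℕ) : |coeffH z n| ≤ 1 := by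
  have h0 := eulerProd_pos hz n
  have h1 := eulerProd_le_one hz0 hz n
  rw [coeffH, abs_of_pos (by positivity), div_le_one (by positivity)]
  linarith [n.cast_nonneg (α := ℝ)]

theorem abs_coeffS_le_one {z : ℝ} (hz0 : 0 ≤ z) (hz : z < 1) (n : ℕ) : |coeffS z n| ≤ 1 := by
  have h0 := eulerProd_pos hz n
  have h1 := eulerProd_le_one hz0 hz n
  rw [abs_of_pos (coeffS_pos hz n), coeffS, div_le_one (by positivity)]
  nlinarith [n.cast_nonneg (α := ℝ)]

theorem abs_coeffT_le_one {z : ℝ} (hz0 : 0 ≤ z) (hz : z < 1) (n : ℕ) : |coeffT z n| ≤ 1 := by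
  have h0 := eulerProd_pos hz n
  have h1 := eulerProd_le_one hz0 hz n
  have hn := n.cast_nonneg (α := ℝ)
  rw [coeffT, coeffS, abs_of_nonneg (by positivity), div_mul_div_comm, div_le_one (by positivity)]
  calc eulerProd z n * (2 * n + 2 + z) ≤ 1 * (2 * n + 2 + 1) := by gcongr
    _ ≤ (n + 1) * (n + 2) * (n + 3) := by
      nlinarith [mul_nonneg hn hn, mul_nonneg hn (mul_nonneg hn hn)]

/-- The series `F(1 - p, 1 + p; 2; y)` with `z = p ^ 2`. -/
noncomputable def serH (z y : ℝ) : ℝ := ∑' n, coeffH z n * y ^ n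

/-- The series `F(1 - p, 1 + p; 3; y) / 2` with `z = p ^ 2`. -/
noncomputable def serS (z y : ℝ) : ℝ := ∑' n, coeffS z n * y ^ n

/-- The series `S - (1 - y) S'` for `S = serS z`. -/
noncomputable def serT (z y : ℝ) : ℝ := ∑' n, coeffT z n * y ^ n

/-- The series `F(-p, p; 1; y)` with `z = p ^ 2`. -/
noncomputable def serG (z y : ℝ) : ℝ := ∑' n, coeffG z n * y ^ n

theorem hyp_neg_self (p y : ℝ) : hyp (-p) p 1 y = serG (p ^ 2) y := by
  refine tsum_congr fun n => ?_
  congr 1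
  have hprod : ∀ n : ℕ, ∏ i ∈ Finset.range n, ((1 : ℝ) + i) = n.factorial := fun n => by
    induction n with
    | zero => simp
    | succ n ih => rw [Finset.prod_range_succ, ih, Nat.factorial_succ]; push_cast; ring
  rw [hprod]
  rcases n with _ | n
  · simp [coeffG]
  induction n with
  | zero => simp [coeffG, eulerProd]; ring
  | succ n ih =>
    rw [Finset.prod_range_succ, Finset.prod_range_succ _ (n + 1), Nat.factorial_succ (n + 1)]
    have e : ∀ A B C : ℝ, A * (-p + ((n + 1 : ℕ) : ℝ)) * (B * (p + ((n + 1 : ℕ) : ℝ))) /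
        (((n + 1 + 1 : ℕ) * (C : ℝ)) * ((n + 1 + 1 : ℕ) * (C : ℝ))) =
        A * B / (C * C) * ((((n : ℝ) + 1) ^ 2 - p ^ 2) / ((n : ℝ) + 2) ^ 2) := fun A B C => by
      rw [div_mul_div_comm]
      push_cast
      congr 1 <;> ring
    rw [Nat.cast_mul, e, ih, coeffG, coeffG, eulerProd_succ]
    push_cast
    field_simp
    ring

theorem hasDerivAt_serG {z y : ℝ} (hz0 : 0 ≤ z) (hz : z < 1) (hy : |y| < 1) :
    HasDerivAt (serG z) (-z * serH z y) y := by
  refine (hasDerivAt_tsum_mul_pow (abs_coeffG_le_one hz0 hz) hy).congr_deriv ?_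
  rw [tsum_deriv_eq (abs_coeffG_le_one hz0 hz) hy, serH, ← tsum_mul_left]
  refine tsum_congr fun n => ?_
  rw [coeffG, coeffH]
  field_simp

theorem hasDerivAt_serH {z y : ℝ} (hz0 : 0 ≤ z) (hz : z < 1) (hy : |y| < 1) :
    HasDerivAt (serH z) ((1 - z) * serS z y / (1 - y)) y := by
  refine (hasDerivAt_tsum_mul_pow (abs_coeffH_le_one hz0 hz) hy).congr_deriv ?_
  have : 1 - y ≠ 0 := (sub_pos.2 (abs_lt.1 hy).2).ne'
  rw [eq_div_iff this, mul_comm _ (1 - y), one_sub_mul_tsum_deriv (abs_coeffH_le_one hz0 hz) hy,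
    serS, ← tsum_mul_left]
  refine tsum_congr fun n => ?_
  rw [coeffS, coeffH, coeffH, eulerProd_succ]
  push_cast
  field_simp
  ring

theorem hasDerivAt_serS {z y : ℝ} (hz0 : 0 ≤ z) (hz : z < 1) (hy : |y| < 1) :
    HasDerivAt (serS z) ((serS z y - serT z y) / (1 - y)) y := by
  refine (hasDerivAt_tsum_mul_pow (abs_coeffS_le_one hz0 hz) hy).congr_deriv ?_
  have : 1 - y ≠ 0 := (sub_pos.2 (abs_lt.1 hy).2).ne'
  rw [eq_div_iff this, mul_comm _ (1 - y), one_sub_mul_tsum_deriv (abs_coeffS_le_one hz0 hz) hy,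
    serS, serT, ← (summable_bounded_mul_pow (abs_coeffS_le_one hz0 hz) hy).tsum_sub
      (summable_bounded_mul_pow (abs_coeffT_le_one hz0 hz) hy)]
  refine tsum_congr fun n => ?_
  rw [coeffT, coeffS, coeffS, eulerProd_succ]
  push_cast
  field_simp
  ring

theorem serS_pos {z y : ℝ} (hz0 : 0 ≤ z) (hz : z < 1) (hy0 : 0 ≤ y) (hy : y < 1) :
    0 < serS z y := by
  refine (summable_bounded_mul_pow (abs_coeffS_le_one hz0 hz)
    (by rwa [abs_of_nonneg hy0])).tsum_pos (fun n => ?_) 0 ?_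
  · exact mul_nonneg (coeffS_pos hz n).le (by positivity)
  · simpa using coeffS_pos hz 0

theorem serS_le_serS_zero {z y : ℝ} (hz0 : 0 ≤ z) (hz : z < 1) (hy0 : 0 ≤ y) (hy : y < 1) :
    serS z y ≤ serS 0 y := by
  have hy' : |y| < 1 := by rwa [abs_of_nonneg hy0]
  refine (summable_bounded_mul_pow (abs_coeffS_le_one hz0 hz) hy').tsum_le_tsum (fun n => ?_)
    (summable_bounded_mul_pow (abs_coeffS_le_one le_rfl one_pos) hy')
  rw [coeffS, coeffS, eulerProd_zero_left]
  gcongr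
  exact eulerProd_le_one hz0 hz n

theorem two_mul_serS_lt_serH {z y : ℝ} (hz0 : 0 ≤ z) (hz : z < 1) (hy0 : 0 < y) (hy : y < 1) :
    2 * serS z y < serH z y := by
  have hy' : |y| < 1 := by rwa [abs_of_pos hy0]
  rw [serS, serH, ← tsum_mul_left]
  have hdiff : ∀ n : ℕ, coeffH z n - 2 * coeffS z n = coeffS z n * n := fun n => by
    rw [coeffH, coeffS]
    field_simp
    ring
  refine ((summable_bounded_mul_pow (abs_coeffS_le_one hz0 hz) hy').mul_left 2).tsum_lt_tsum
    (i := 1) (fun n => ?_) ?_ (summable_bounded_mul_pow (abs_coeffH_le_one hz0 hz) hy')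
  · have := mul_nonneg (mul_nonneg (coeffS_pos hz n).le n.cast_nonneg) (pow_nonneg hy0.le n)
    rw [← hdiff] at this
    linarith
  · have := mul_pos (mul_pos (coeffS_pos hz 1) (one_pos)) (pow_pos hy0 1)
    have h1 := hdiff 1
    rw [Nat.cast_one] at h1
    rw [← h1] at this
    linarith

theorem monotone_ratio_coeffT_coeffS {z : ℝ} (hz : z < 1) :
    Monotone fun n : ℕ => (2 * (n : ℝ) + 2 + z) / (n + 3) :=
  monotone_nat_of_le_succ fun n => by
    push_cast
    rw [div_le_div_iff₀ (by positivity) (by positivity)]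
    nlinarith

theorem serT_mul_serS_le {u y : ℝ} (hu : 0 < u) (huy : u ≤ y) (hy : y < 1) :
    serT 0 u * serS 0 y ≤ serT 0 y * serS 0 u := by
  have hy' : |y| < 1 := by rwa [abs_of_pos (hu.trans_le huy)]
  have hu' : |u| < 1 := by rw [abs_of_pos hu]; exact huy.trans_lt hy
  have hS := abs_coeffS_le_one le_rfl one_pos
  have hT := abs_coeffT_le_one le_rfl one_pos
  have hT' : ∀ x : ℝ, (fun n : ℕ => coeffT 0 n * x ^ n) =
      fun n : ℕ => coeffS 0 n * x ^ n * ((2 * n + 2 + 0) / (n + 3)) := fun x =>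
    funext fun n => by rw [coeffT]; ring
  have hpow : ∀ n, u ^ n * (y / u) ^ n = y ^ n := fun n => by
    rw [← mul_pow, mul_div_cancel₀ _ hu.ne']
  have hSy : (fun n : ℕ => coeffS 0 n * y ^ n) =
      fun n : ℕ => coeffS 0 n * u ^ n * (y / u) ^ n := funext fun n => by rw [mul_assoc, hpow]
  have hTy : (fun n : ℕ => coeffT 0 n * y ^ n) =
      fun n : ℕ => coeffS 0 n * u ^ n * ((2 * n + 2 + 0) / (n + 3)) * (y / u) ^ n :=
    funext fun n => by rw [coeffT, ← hpow]; ring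
  have sTu := summable_bounded_mul_pow hT hu'
  have sSy := summable_bounded_mul_pow hS hy'
  have sTy := summable_bounded_mul_pow hT hy'
  rw [hT'] at sTu
  rw [hSy] at sSy
  rw [hTy] at sTy
  have := tsum_chebyshev (fun n => mul_nonneg (coeffS_pos one_pos n).le (pow_nonneg hu.le n))
    (monotone_ratio_coeffT_coeffS one_pos) (pow_right_mono₀ ((one_le_div hu).2 huy))
    (summable_bounded_mul_pow hS hu') sTu sSy sTy
  rwa [← hT', ← hSy, ← hTy] at this

theorem serT_mul_serS_zero_le {z u : ℝ} (hz0 : 0 ≤ z) (hz : z < 1) (hu : 0 < u) (hu1 : u < 1) :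
    serT z u * serS 0 u ≤ (1 + z / 2) * serT 0 u * serS z u := by
  have hu' : |u| < 1 := by rwa [abs_of_pos hu]
  have hw : ∀ n, 0 ≤ coeffS 0 n * u ^ n := fun n =>
    mul_nonneg (coeffS_pos one_pos n).le (pow_nonneg hu.le n)
  have sS0 := summable_bounded_mul_pow (abs_coeffS_le_one le_rfl one_pos) hu'
  have sT0 := summable_bounded_mul_pow (abs_coeffT_le_one le_rfl one_pos) hu'
  have hle : ∀ n : ℕ, coeffS 0 n * u ^ n * ((2 * n + 2 + z) / (n + 3)) ≤
      (1 + z / 2) * (coeffT 0 n * u ^ n) := fun n => by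
    have : (2 * n + 2 + z) / (n + 3) ≤ (1 + z / 2) * ((2 * n + 2 + 0) / ((n : ℝ) + 3)) := by
      rw [← mul_div_assoc]
      gcongr
      nlinarith [mul_nonneg hz0 (n.cast_nonneg (α := ℝ))]
    calc _ ≤ coeffS 0 n * u ^ n * ((1 + z / 2) * ((2 * n + 2 + 0) / ((n : ℝ) + 3))) :=
          mul_le_mul_of_nonneg_left this (hw n)
      _ = _ := by rw [coeffT]; ring
  have sθ : Summable fun n : ℕ => coeffS 0 n * u ^ n * ((2 * n + 2 + z) / (n + 3)) :=
    .of_nonneg_of_le (fun n => mul_nonneg (hw n) (by positivity)) hle (sT0.mul_left _)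
  have hS : (fun n : ℕ => coeffS 0 n * u ^ n * -eulerProd z n) =
      fun n : ℕ => -(coeffS z n * u ^ n) :=
    funext fun n => by rw [coeffS, coeffS, eulerProd_zero_left]; ring
  have hT : (fun n : ℕ => coeffS 0 n * u ^ n * ((2 * n + 2 + z) / (n + 3)) * -eulerProd z n) =
      fun n : ℕ => -(coeffT z n * u ^ n) :=
    funext fun n => by rw [coeffT, coeffS, coeffS, eulerProd_zero_left]; ring
  have key := tsum_chebyshev hw (monotone_ratio_coeffT_coeffS hz) (eulerProd_antitone hz0 hz).neg
    sS0 sθ (r := fun n => -eulerProd z n)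
    (hS ▸ (summable_bounded_mul_pow (abs_coeffS_le_one hz0 hz) hu').neg)
    (hT ▸ (summable_bounded_mul_pow (abs_coeffT_le_one hz0 hz) hu').neg)
  rw [hS, hT, tsum_neg, tsum_neg] at key
  change _ * -serS z u ≤ -serT z u * serS 0 u at key
  have hθ : ∑' n : ℕ, coeffS 0 n * u ^ n * ((2 * n + 2 + z) / (n + 3)) ≤
      (1 + z / 2) * serT 0 u := by
    rw [serT, ← tsum_mul_left]
    exact sθ.tsum_le_tsum hle (sT0.mul_left _)
  nlinarith [mul_le_mul_of_nonneg_right hθ (serS_pos hz0 hz hu.le hu1).le]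

theorem serT_zero_nonneg {u : ℝ} (hu : 0 ≤ u) : 0 ≤ serT 0 u :=
  tsum_nonneg fun n => mul_nonneg
    (mul_nonneg (coeffS_pos one_pos n).le (by positivity)) (pow_nonneg hu n)

theorem abs_one_sub_lt_one {t : ℝ} (h0 : 0 < t) (h1 : t ≤ 1) : |1 - t| < 1 := by
  rw [abs_of_nonneg (by linarith)]
  linarith

theorem hasDerivAt_one_sub_rpow {t : ℝ} (k : ℝ) (h0 : 0 < t) :
    HasDerivAt (fun s : ℝ => 1 - s ^ k) (-(k * t ^ (k - 1))) t :=
  (hasDerivAt_rpow_const (Or.inl h0.ne')).const_sub 1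

theorem rpow_mul_serS_zero_le {z k t : ℝ} (hz0 : 0 ≤ z) (hz : z < 1) (hk : 1 + z / 2 ≤ k)
    (h0 : 0 < t) (h1 : t < 1) : t ^ (k - 1) * serS 0 (1 - t ^ k) ≤ serS z (1 - t) := by
  have hk0 : 0 < k := by linarith
  have hder : ∀ s ∈ Ioc (0 : ℝ) 1, HasDerivAt
      (fun s => log (serS z (1 - s)) - (k - 1) * log s - log (serS 0 (1 - s ^ k)))
      ((serT z (1 - s) / serS z (1 - s) - k * (serT 0 (1 - s ^ k) / serS 0 (1 - s ^ k))) / s)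
      s := by
    rintro s ⟨hs0, hs1⟩
    have hsk0 : 0 < s ^ k := rpow_pos_of_pos hs0 k
    have hsk1 : s ^ k ≤ 1 := rpow_le_one hs0.le hs1 hk0.le
    have p1 := serS_pos hz0 hz (sub_nonneg.2 hs1) (sub_lt_self 1 hs0)
    have p2 := serS_pos le_rfl one_pos (sub_nonneg.2 hsk1) (sub_lt_self 1 hsk0)
    have d1 := ((hasDerivAt_serS hz0 hz (abs_one_sub_lt_one hs0 hs1)).comp s
      ((hasDerivAt_id s).const_sub 1)).log p1.ne'
    have d2 := (hasDerivAt_serS le_rfl one_pos (abs_one_sub_lt_one hsk0 hsk1)).comp s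
      (hasDerivAt_one_sub_rpow k hs0)
    refine ((d1.sub ((hasDerivAt_log hs0.ne').const_mul (k - 1))).sub (d2.log p2.ne')).congr_deriv ?_
    simp only [Function.comp_apply, sub_sub_cancel]
    have hpow : s ^ k = s ^ (k - 1) * s := by
      rw [rpow_sub_one hs0.ne', div_mul_cancel₀ _ hs0.ne']
    have hq : 0 < s ^ (k - 1) := rpow_pos_of_pos hs0 _
    generalize serT 0 (1 - s ^ k) = T at *
    generalize serS 0 (1 - s ^ k) = S at *
    rw [hpow]
    field_simp
    ring
  have hanti : AntitoneOn
      (fun s => log (serS z (1 - s)) - (k - 1) * log s - log (serS 0 (1 - s ^ k)))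
      (Ioc (0 : ℝ) 1) := by
    refine antitoneOn_of_deriv_nonpos (convex_Ioc 0 1)
      (fun s hs => (hder s hs).continuousAt.continuousWithinAt)
      (fun s hs => (hder s (interior_subset hs)).differentiableAt.differentiableWithinAt)
      fun s hs => ?_
    rw [(hder s (interior_subset hs)).deriv]
    rw [interior_Ioc] at hs
    obtain ⟨hs0, hs1⟩ := hs
    have hsk0 : 0 < s ^ k := rpow_pos_of_pos hs0 k
    have hsk : s ^ k ≤ s := by
      simpa using rpow_le_rpow_of_exponent_ge hs0 hs1.le (by linarith : 1 ≤ k)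
    have hu : 0 < 1 - s := sub_pos.2 hs1
    have hu1 : 1 - s < 1 := sub_lt_self 1 hs0
    have hy1 : 1 - s ^ k < 1 := sub_lt_self 1 hsk0
    have huy : 1 - s ≤ 1 - s ^ k := by linarith
    have p0 := serS_pos le_rfl one_pos hu.le hu1
    have p1 := serS_pos hz0 hz hu.le hu1
    have p2 := serS_pos le_rfl one_pos (hu.le.trans huy) hy1
    refine div_nonpos_of_nonpos_of_nonneg (sub_nonpos.2 ?_) hs0.le
    calc serT z (1 - s) / serS z (1 - s)
        ≤ (1 + z / 2) * (serT 0 (1 - s) / serS 0 (1 - s)) := by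
          rw [← mul_div_assoc, div_le_div_iff₀ p1 p0]
          exact serT_mul_serS_zero_le hz0 hz hu hu1
      _ ≤ k * (serT 0 (1 - s) / serS 0 (1 - s)) :=
          mul_le_mul_of_nonneg_right hk (div_nonneg (serT_zero_nonneg hu.le) p0.le)
      _ ≤ k * (serT 0 (1 - s ^ k) / serS 0 (1 - s ^ k)) := by
          refine mul_le_mul_of_nonneg_left ?_ hk0.le
          rw [div_le_div_iff₀ p0 p2]
          exact serT_mul_serS_le hu huy hy1
  have htk0 : 0 < t ^ k := rpow_pos_of_pos h0 k
  have htk1 : t ^ k ≤ 1 := rpow_le_one h0.le h1.le hk0.le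
  have p1 := serS_pos hz0 hz (sub_nonneg.2 h1.le) (sub_lt_self 1 h0)
  have p2 := serS_pos le_rfl one_pos (sub_nonneg.2 htk1) (sub_lt_self 1 htk0)
  have h := hanti ⟨h0, h1.le⟩ ⟨one_pos, le_rfl⟩ h1.le
  have hS0 : ∀ z, serS z 0 = 1 / 2 := fun z => by
    rw [serS, tsum_eq_single 0 fun n hn => by simp [hn]]
    norm_num [coeffS, eulerProd_zero_right]
  simp only [sub_self, one_rpow, log_one, mul_zero, sub_zero, hS0] at h
  rw [← log_le_log_iff (mul_pos (rpow_pos_of_pos h0 _) p2) p1,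
    log_mul (rpow_pos_of_pos h0 _).ne' p2.ne', log_rpow h0]
  linarith

/-! ### Behaviour at the end point -/

theorem summable_abs_coeffG {z : ℝ} (hz0 : 0 ≤ z) (hz : z < 1) :
    Summable fun n => |coeffG z n| := by
  refine (summable_nat_add_iff 1).1 (.of_nonneg_of_le (fun n => abs_nonneg _)
    (abs_coeffG_le hz0 hz) ?_)
  simpa using (summable_nat_add_iff 1).2 (Real.summable_one_div_nat_pow.2 one_lt_two)

theorem continuousOn_serG {z : ℝ} (hz0 : 0 ≤ z) (hz : z < 1) :
    ContinuousOn (serG z) (Icc 0 1) := by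
  refine continuousOn_tsum (fun n => by fun_prop) (summable_abs_coeffG hz0 hz) fun n x hx => ?_
  rw [norm_mul, norm_pow, Real.norm_eq_abs, Real.norm_eq_abs, abs_of_nonneg hx.1]
  exact mul_le_of_le_one_right (abs_nonneg _) (pow_le_one₀ hx.1 hx.2)

theorem sum_coeffG (z : ℝ) (n : ℕ) :
    ∑ i ∈ Finset.range (n + 1), coeffG z i = eulerProd z n := by
  induction n with
  | zero => simp [coeffG, eulerProd]
  | succ n ih =>
    rw [Finset.sum_range_succ, ih, eulerProd_succ, coeffG]
    ring

theorem serG_one {p : ℝ} (hp0 : 0 < p) (hp : p < 1) :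
    serG (p ^ 2) 1 = sin (π * p) / (π * p) := by
  have hs := (summable_abs_coeffG (sq_nonneg p) (pow_lt_one₀ hp0.le hp two_ne_zero)).of_abs
  have h1 := (tendsto_add_atTop_iff_nat 1).2 hs.hasSum.tendsto_sum_nat
  simp only [sum_coeffG] at h1
  have h2 : Tendsto (eulerProd (p ^ 2)) atTop (𝓝 (sin (π * p) / (π * p))) := by
    refine ((Real.tendsto_euler_sin_prod p).div_const (π * p)).congr fun n => ?_
    rw [mul_div_cancel_left₀ _ (by positivity), eulerProd]
  simpa [serG] using tendsto_nhds_unique h1 h2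

theorem serG_zero (z : ℝ) : serG z 0 = 1 := by
  rw [serG, tsum_eq_single 0 fun n hn => by simp [hn]]
  simp [coeffG]

theorem serH_zero (z : ℝ) : serH z 0 = 1 := by
  rw [serH, tsum_eq_single 0 fun n hn => by simp [hn]]
  simp [coeffH, eulerProd]

/-! ### Convexity of the difference -/

/-- The derivative of `t ↦ G_w(1 - t ^ k) - G_z(1 - t)`, where `G_z` is `serG z`. -/
noncomputable def diffDeriv (z w k t : ℝ) : ℝ :=
  k * w * (t ^ (k - 1) * serH w (1 - t ^ k)) - z * serH z (1 - t)

theorem hasDerivAt_serG_sub {z w k t : ℝ} (hz0 : 0 ≤ z) (hz : z < 1) (hw0 : 0 ≤ w) (hw : w < 1)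
    (hk : 0 < k) (h0 : 0 < t) (h1 : t ≤ 1) :
    HasDerivAt (fun t => serG w (1 - t ^ k) - serG z (1 - t)) (diffDeriv z w k t) t := by
  have htk0 : 0 < t ^ k := rpow_pos_of_pos h0 k
  have htk1 : t ^ k ≤ 1 := rpow_le_one h0.le h1 hk.le
  have d1 := (hasDerivAt_serG hw0 hw (abs_one_sub_lt_one htk0 htk1)).comp t
    (hasDerivAt_one_sub_rpow k h0)
  have d2 := (hasDerivAt_serG hz0 hz (abs_one_sub_lt_one h0 h1)).comp t
    ((hasDerivAt_id t).const_sub 1)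
  refine (d1.sub d2).congr_deriv ?_
  simp only [diffDeriv]
  ring

theorem hasDerivAt_diffDeriv {z w k t : ℝ} (hz0 : 0 ≤ z) (hz : z < 1) (hw0 : 0 ≤ w) (hw : w < 1)
    (hk : 0 < k) (h0 : 0 < t) (h1 : t ≤ 1) :
    HasDerivAt (diffDeriv z w k)
      ((k * w * (t ^ (k - 1) * ((k - 1) * serH w (1 - t ^ k) -
        k * (1 - w) * serS w (1 - t ^ k))) + z * (1 - z) * serS z (1 - t)) / t) t := by
  have htk0 : 0 < t ^ k := rpow_pos_of_pos h0 k
  have htk1 : t ^ k ≤ 1 := rpow_le_one h0.le h1 hk.le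
  have d1 := (hasDerivAt_serH hw0 hw (abs_one_sub_lt_one htk0 htk1)).comp t
    (hasDerivAt_one_sub_rpow k h0)
  have d2 := (hasDerivAt_serH hz0 hz (abs_one_sub_lt_one h0 h1)).comp t
    ((hasDerivAt_id t).const_sub 1)
  refine (((((hasDerivAt_rpow_const (p := k - 1) (Or.inl h0.ne')).mul d1).const_mul (k * w)).sub
    (d2.const_mul z))).congr_deriv ?_
  simp only [Function.comp_apply, sub_sub_cancel]
  have hpow : t ^ k = t ^ (k - 1) * t := by
    rw [rpow_sub_one h0.ne', div_mul_cancel₀ _ h0.ne']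
  have hq : 0 < t ^ (k - 1) := rpow_pos_of_pos h0 _
  generalize serH w (1 - t ^ k) = H at *
  generalize serS w (1 - t ^ k) = S at *
  rw [hpow, rpow_sub_one h0.ne' (k - 1)]
  field_simp
  ring

theorem strictMonoOn_diffDeriv {z w k : ℝ} (hz0 : 0 ≤ z) (hz : z < 1) (hw0 : 0 < w) (hw : w < 1)
    (hk1 : 1 < k) (hk : 1 + z / 2 ≤ k) (hK : k * w * (2 - k - k * w) ≤ z * (1 - z)) :
    StrictMonoOn (diffDeriv z w k) (Ioc 0 1) := by
  have hk0 : 0 < k := by linarith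
  refine strictMonoOn_of_deriv_pos (convex_Ioc 0 1) (fun t ht =>
    (hasDerivAt_diffDeriv hz0 hz hw0.le hw hk0 ht.1 ht.2).continuousAt.continuousWithinAt)
    fun t ht => ?_
  rw [interior_Ioc] at ht
  obtain ⟨h0, h1⟩ := ht
  rw [(hasDerivAt_diffDeriv hz0 hz hw0.le hw hk0 h0 h1.le).deriv]
  refine div_pos ?_ h0
  have htk0 : 0 < t ^ k := rpow_pos_of_pos h0 k
  have htk1 : t ^ k < 1 := rpow_lt_one h0.le h1 hk0
  have hq : 0 < t ^ (k - 1) := rpow_pos_of_pos h0 _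
  have hy0 : 0 < 1 - t ^ k := sub_pos.2 htk1
  have hy1 : 1 - t ^ k < 1 := sub_lt_self 1 htk0
  have hSH := two_mul_serS_lt_serH hw0.le hw hy0 hy1
  have hX : t ^ (k - 1) * serS w (1 - t ^ k) ≤ serS z (1 - t) :=
    (mul_le_mul_of_nonneg_left (serS_le_serS_zero hw0.le hw hy0.le hy1) hq.le).trans
      (rpow_mul_serS_zero_le hz0 hz hk h0 h1)
  have hX0 : 0 ≤ t ^ (k - 1) * serS w (1 - t ^ k) :=
    mul_nonneg hq.le (serS_pos hw0.le hw hy0.le hy1).le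
  have a1 := mul_le_mul_of_nonneg_right hK hX0
  have a2 := mul_le_mul_of_nonneg_left hX (mul_nonneg hz0 (sub_nonneg.2 hz.le))
  have a3 : 0 < k * w * t ^ (k - 1) * (k - 1) * (serH w (1 - t ^ k) - 2 * serS w (1 - t ^ k)) :=
    mul_pos (mul_pos (by positivity) (sub_pos.2 hk1)) (sub_pos.2 hSH)
  linear_combination a1 + a2 + a3

theorem serG_sub_bounds {z w k t : ℝ} (hz0 : 0 ≤ z) (hz : z < 1) (hw0 : 0 < w) (hw : w < 1)
    (hk1 : 1 < k) (hk : 1 + z / 2 ≤ k) (hK : k * w * (2 - k - k * w) ≤ z * (1 - z))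
    (h0 : 0 < t) (h1 : t < 1) :
    (z - k * w) * (1 - t) < serG w (1 - t ^ k) - serG z (1 - t) ∧
    serG w (1 - t ^ k) - serG z (1 - t) < (serG w 1 - serG z 1) * (1 - t) := by
  have hk0 : 0 < k := by linarith
  set f : ℝ → ℝ := fun t => serG w (1 - t ^ k) - serG z (1 - t) with hf
  have hder : ∀ s ∈ Ioc (0 : ℝ) 1, HasDerivAt f (diffDeriv z w k s) s := fun s hs =>
    hasDerivAt_serG_sub hz0 hz hw0.le hw hk0 hs.1 hs.2
  have hmono := strictMonoOn_diffDeriv hz0 hz hw0 hw hk1 hk hK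
  have hcont : ContinuousOn f (Icc 0 1) := by
    refine ((continuousOn_serG hw0.le hw).comp (t := Icc 0 1) ?_ fun s hs => ?_).sub
      ((continuousOn_serG hz0 hz).comp (t := Icc 0 1) (by fun_prop) fun s hs => ?_)
    · exact continuousOn_const.sub (continuousOn_id.rpow_const fun _ _ => Or.inr hk0.le)
    · exact ⟨sub_nonneg.2 (rpow_le_one hs.1 hs.2 hk0.le),
        sub_le_self 1 (rpow_nonneg hs.1 k)⟩
    · exact ⟨sub_nonneg.2 hs.2, sub_le_self 1 hs.1⟩
  have hf1 : f 1 = 0 := by simp [hf, serG_zero]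
  have hf0 : f 0 = serG w 1 - serG z 1 := by simp [hf, zero_rpow hk0.ne']
  obtain ⟨ξ, hξ, hξe⟩ := exists_hasDerivAt_eq_slope f (diffDeriv z w k) h1
    (hcont.mono (Icc_subset_Icc_left h0.le)) fun s hs => hder s ⟨h0.trans hs.1, hs.2.le⟩
  obtain ⟨η, hη, hηe⟩ := exists_hasDerivAt_eq_slope f (diffDeriv z w k) h0
    (hcont.mono (Icc_subset_Icc_right h1.le)) fun s hs => hder s ⟨hs.1, (hs.2.trans h1).le⟩
  rw [eq_div_iff (by linarith), hf1] at hξe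
  rw [eq_div_iff (by linarith), hf0] at hηe
  have hξ1 := hmono ⟨h0.trans hξ.1, hξ.2.le⟩ ⟨one_pos, le_rfl⟩ hξ.2
  have hηξ := hmono ⟨hη.1, (hη.2.trans h1).le⟩ ⟨h0.trans hξ.1, hξ.2.le⟩ (hη.2.trans hξ.1)
  have hd1 : diffDeriv z w k 1 = k * w - z := by simp [diffDeriv, serH_zero]
  rw [hd1] at hξ1
  change _ < f t ∧ f t < _
  constructor
  · nlinarith
  · nlinarith [mul_lt_mul_of_pos_left hηξ (mul_pos h0 (sub_pos.2 h1))]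

/-! ### The parameter region -/

theorem parameter_bound {z z₀ k P : ℝ} (hz0 : 0 < z) (hzz : z ≤ z₀)
    (hroot : 4 * z₀ * (1 - z₀) * (1 + z₀) ^ 2 = 1) (hk : (2 * z + 1) / (z + 1) ≤ k)
    (hP0 : 0 < P) (hP : P ≤ z) : P * (2 - k - P) ≤ z * (1 - z) := by
  have hq : 2 - k ≤ 1 / (z + 1) := by
    have : (2 * z + 1) / (z + 1) = 2 - 1 / (z + 1) := by field_simp; ring
    linarith
  set q := 1 / (z + 1) with hqdef
  have hqz : q * (z + 1) = 1 := by rw [hqdef]; field_simp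
  have hq0 : 0 < q := by positivity
  have hPq : P * (2 - k - P) ≤ P * (q - P) := by gcongr
  refine hPq.trans ?_
  rcases le_total z (1 / 4) with h4 | h4
  · have hq1 : q ≤ 1 := by nlinarith
    have : 2 * z ≤ q := by nlinarith
    nlinarith [mul_nonneg (sub_nonneg.2 hP) (by linarith : 0 ≤ q - z - P)]
  · have hf : 1 ≤ 4 * z * (1 - z) * (1 + z) ^ 2 := by
      have hz4 : 1 / 4 < z₀ := (h4.trans hzz).lt_of_ne fun h => by
        rw [← h] at hroot
        norm_num at hroot
      have hQ : 0 ≤ -1 + (1 / 4 + z + z₀) +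
          (1 / 16 + z ^ 2 + z₀ ^ 2 + z / 4 + z₀ / 4 + z * z₀) := by nlinarith
      have hprod : 0 ≤ (z - 1 / 4) * (z₀ - z) * (z₀ - 1 / 4) * (-1 + (1 / 4 + z + z₀) +
          (1 / 16 + z ^ 2 + z₀ ^ 2 + z / 4 + z₀ / 4 + z * z₀)) :=
        mul_nonneg (mul_nonneg (mul_nonneg (sub_nonneg.2 h4) (sub_nonneg.2 hzz))
          (sub_nonneg.2 hz4.le)) hQ
      have hmul : 0 ≤ (z₀ - 1 / 4) * (4 * z * (1 - z) * (1 + z) ^ 2 - 1) := by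
        have e : (z₀ - 1 / 4) * (4 * z * (1 - z) * (1 + z) ^ 2 - 1) =
            4 * ((z - 1 / 4) * (z₀ - z) * (z₀ - 1 / 4) * (-1 + (1 / 4 + z + z₀) +
              (1 / 16 + z ^ 2 + z₀ ^ 2 + z / 4 + z₀ / 4 + z * z₀))) +
            (z₀ - z) * (11 / 64) := by
          linear_combination (z - 1 / 4) * hroot
        rw [e]
        linarith
      linarith [nonneg_of_mul_nonneg_right hmul (sub_pos.2 hz4)]
    have : q ^ 2 ≤ 4 * (z * (1 - z)) := by
      have : (1 + z) ^ 2 * q ^ 2 = 1 := by rw [← mul_pow, add_comm, mul_comm, hqz, one_pow]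
      nlinarith [mul_le_mul_of_nonneg_right hf (sq_nonneg q)]
    nlinarith [sq_nonneg (2 * P - q)]

theorem stmt14 (a₀ a c d : ℝ)
    (ha₀ : a₀ ∈ Ioo (0:ℝ) 1)
    (hroot : 4 * a₀ * (2 - a₀) * (1 - a₀) ^ 2 * (a₀ ^ 2 - 2 * a₀ + 2) ^ 2 = 1)
    (hmin : ∀ x ∈ Ioo (0:ℝ) 1,
      4 * x * (2 - x) * (1 - x) ^ 2 * (x ^ 2 - 2 * x + 2) ^ 2 = 1 → a₀ ≤ x)
    (ha : a ∈ Ico a₀ 1)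
    (hc : 0 < c) (hd : 0 < d) (hcd : c / d ≤ ((a - 1) ^ 2 + 1) / (2 * (a - 1) ^ 2 + 1)) :
    ∀ x ∈ Ioo (0:ℝ) 1, ∀ δ ∈ Ioc (a - 1) ((Real.sqrt (c / d) - 1) * (1 - a)),
      hyp (a - 1) (1 - a) 1 (1 - x ^ c) +
          (-(d / c) * (δ ^ 2 + 2 * (1 - a) * δ + (1 - a) ^ 2 * (1 - c / d))) * (1 - x ^ c)
        < hyp (a - 1 - δ) (1 - a + δ) 1 (1 - x ^ d) ∧
      hyp (a - 1 - δ) (1 - a + δ) 1 (1 - x ^ d)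
        < hyp (a - 1) (1 - a) 1 (1 - x ^ c) +
            ((1 / π) * (Real.sin (π * (a - δ)) / (1 - a + δ) - Real.sin (π * a) / (1 - a))) *
              (1 - x ^ c) := by
  rintro x ⟨hx0, hx1⟩ δ ⟨hδ0, hδ⟩
  obtain ⟨ha₀0, ha₀1⟩ := ha₀
  obtain ⟨haa, ha1⟩ := ha
  obtain ⟨b, rfl⟩ : ∃ b, a = 1 - b := ⟨1 - a, by ring⟩
  obtain ⟨p, rfl⟩ : ∃ p, δ = p - b := ⟨δ + b, by ring⟩
  have hb0 : 0 < b := by linarith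
  have hb1 : b < 1 := by linarith
  have hp0 : 0 < p := by linarith
  have hz0 : 0 < b ^ 2 := by positivity
  have hz1 : b ^ 2 < 1 := pow_lt_one₀ hb0.le hb1 two_ne_zero
  have hk : (2 * b ^ 2 + 1) / (b ^ 2 + 1) ≤ d / c := by
    have h := one_div_le_one_div_of_le (div_pos hc hd) hcd
    rwa [one_div_div, one_div_div, show (1 - b - 1) ^ 2 = b ^ 2 by ring] at h
  have hkz : 1 + b ^ 2 / 2 ≤ d / c := by
    refine le_trans ?_ hk
    rw [le_div_iff₀ (by positivity)]
    nlinarith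
  have hk1 : 1 < d / c := by linarith
  have hP : d / c * p ^ 2 ≤ b ^ 2 := by
    have hp : p ≤ √(c / d) * b := by linarith
    have h := pow_le_pow_left₀ hp0.le hp 2
    rw [mul_pow, Real.sq_sqrt (by positivity)] at h
    calc d / c * p ^ 2 ≤ d / c * (c / d * b ^ 2) := by gcongr
      _ = b ^ 2 := by field_simp
  have hw0 : 0 < p ^ 2 := by positivity
  have hw1 : p ^ 2 < 1 := by nlinarith
  have hp1 : p < 1 := by nlinarith
  have hK := parameter_bound (z₀ := (1 - a₀) ^ 2) hz0
    (pow_le_pow_left₀ hb0.le (by linarith) 2) (by linear_combination hroot) hk (by positivity) hP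
  obtain ⟨hl, hu⟩ := serG_sub_bounds hz0.le hz1 hw0 hw1 hk1 hkz hK
    (rpow_pos_of_pos hx0 c) (rpow_lt_one hx0.le hx1 hc)
  rw [← rpow_mul hx0.le, mul_div_cancel₀ _ hc.ne'] at hl hu
  rw [serG_one hp0 hp1, serG_one hb0 hb1] at hu
  have s1 : sin (π * (1 - b - (p - b))) = sin (π * p) := by
    rw [← Real.sin_pi_sub]; ring_nf
  have s2 : sin (π * (1 - b)) = sin (π * b) := by
    rw [← Real.sin_pi_sub]; ring_nf
  rw [s1, s2, show 1 - b - 1 - (p - b) = -p by ring, show 1 - (1 - b) + (p - b) = p by ring,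
    show 1 - b - 1 = -b by ring, show 1 - (1 - b) = b by ring, hyp_neg_self, hyp_neg_self]
  have e1 : -(d / c) * ((p - b) ^ 2 + 2 * b * (p - b) + b ^ 2 * (1 - c / d)) =
      b ^ 2 - d / c * p ^ 2 := by
    field_simp
    ring
  have e2 : 1 / π * (sin (π * p) / p - sin (π * b) / b) =
      sin (π * p) / (π * p) - sin (π * b) / (π * b) := by
    field_simp
  rw [e1, e2]
  constructor <;> linarith
end

section
/- Let a₀ ∈ (0,1) be the minimal root of 4a(2−a)(1−a)²(a²−2a+2)² = 1, let a ∈ (a₀, 1), and let δ₄ = (√6/3 − 1)(1−a) < 0. Then for all x ∈ (0,1) and all δ ∈ (a−1, δ₄], F(a−1, 1−a; 1; 1−x²) + C₇(δ)(1−x²) < F(a−1−δ, 1−a+δ; 1; 1−x³) < F(a−1, 1−a; 1; 1−x²) + C₈(δ)(1−x²), where C₇(δ) = −(3/2)·(δ² + 2(1−a)δ + (1−a)²/3) ≥ 0 and C₈(δ) = (1/π)·[sin(π(a−δ))/(1−a+δ) − sin(πa)/(1−a)]. -/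
open Real Set Filter Topology

section PowerSeries

lemma summable_mul_pow_of_abs_le_one {c : ℕ → ℝ} (hc : ∀ n, |c n| ≤ 1) {t : ℝ} (ht : |t| < 1) :
    Summable fun n => c n * t ^ n := by
  refine Summable.of_norm_bounded (summable_geometric_of_lt_one (abs_nonneg t) ht) fun n => ?_
  rw [Real.norm_eq_abs, abs_mul, abs_pow]
  exact mul_le_of_le_one_left (by positivity) (hc n)

lemma summable_nat_mul_mul_pow {c : ℕ → ℝ} (hc : ∀ n, |c n| ≤ 1) {t : ℝ} (ht : |t| < 1) :
    Summable fun n : ℕ => (n * c n) * t ^ n := by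
  have h := summable_pow_mul_geometric_of_norm_lt_one 1 (r := |t|) (by simpa using ht)
  refine Summable.of_norm_bounded h fun n => ?_
  rw [Real.norm_eq_abs, abs_mul, abs_mul, abs_pow, Nat.abs_cast, pow_one]
  gcongr
  exact mul_le_of_le_one_right (by positivity) (hc n)

lemma summable_succ_mul_mul_pow {c : ℕ → ℝ} (hc : ∀ n, |c n| ≤ 1) {t : ℝ} (ht : |t| < 1) :
    Summable fun n : ℕ => ((n + 1) * c (n + 1)) * t ^ n := by
  have hc' : ∀ n, |c (n + 1)| ≤ 1 := fun n => hc (n + 1)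
  refine ((summable_nat_mul_mul_pow hc' ht).add (summable_mul_pow_of_abs_le_one hc' ht)).congr
    fun n => ?_
  ring

lemma hasDerivAt_tsum_mul_pow_s18 {c : ℕ → ℝ} (hc : ∀ n, |c n| ≤ 1) {t : ℝ} (ht : |t| < 1) :
    HasDerivAt (fun t => ∑' n, c n * t ^ n) (∑' n : ℕ, ((n + 1) * c (n + 1)) * t ^ n) t := by
  obtain ⟨r, htr, hr⟩ := exists_between ht
  have hr0 : 0 ≤ r := (abs_nonneg t).trans htr.le
  have hr1 : |r| < 1 := by rwa [abs_of_nonneg hr0]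
  have hu : Summable fun n : ℕ => (n : ℝ) * r ^ (n - 1) := by
    rw [← summable_nat_add_iff 1]
    simpa using summable_succ_mul_mul_pow (c := fun _ => 1) (by simp) hr1
  have hball : t ∈ Metric.ball (0 : ℝ) r := by simpa using htr
  have key := hasDerivAt_tsum_of_isPreconnected (g := fun n t => c n * t ^ n)
    (g' := fun n t => c n * (n * t ^ (n - 1))) (t := Metric.ball (0 : ℝ) r) hu Metric.isOpen_ball
    (convex_ball (0 : ℝ) r).isPreconnected
    (fun n y _ => (hasDerivAt_pow n y).const_mul (c n))
    (fun n y hy => by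
      have hy' : |y| ≤ r := by simpa using (Metric.mem_ball.1 hy).le
      rw [Real.norm_eq_abs, abs_mul, abs_mul, abs_pow, Nat.abs_cast]
      refine (mul_le_of_le_one_left (by positivity) (hc n)).trans ?_
      gcongr)
    hball (summable_mul_pow_of_abs_le_one hc ht) hball
  refine key.congr_deriv ?_
  have hs : Summable fun n : ℕ => c n * (n * t ^ (n - 1)) := by
    rw [← summable_nat_add_iff 1]
    refine (summable_succ_mul_mul_pow hc ht).congr fun n => ?_
    rw [Nat.add_sub_cancel]
    push_cast
    ring
  rw [hs.tsum_eq_zero_add]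
  simp only [Nat.cast_zero, zero_mul, mul_zero, zero_add]
  refine tsum_congr fun n => ?_
  rw [Nat.add_sub_cancel]
  push_cast
  ring

end PowerSeries

/-- The partial products of Euler's product for `sin (π p) / (π p)`. -/
noncomputable def eulerSinProd (p : ℝ) (n : ℕ) : ℝ :=
  ∏ j ∈ Finset.range n, (1 - p ^ 2 / ((j : ℝ) + 1) ^ 2)

lemma eulerSinProd_zero (p : ℝ) : eulerSinProd p 0 = 1 := by simp [eulerSinProd]

lemma eulerSinProd_succ (p : ℝ) (n : ℕ) :
    eulerSinProd p (n + 1) = eulerSinProd p n * (1 - p ^ 2 / ((n : ℝ) + 1) ^ 2) :=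
  Finset.prod_range_succ _ _

lemma eulerSinProd_factor_mem {p : ℝ} (hp : p ∈ Ioo (0 : ℝ) 1) (n : ℕ) :
    1 - p ^ 2 / ((n : ℝ) + 1) ^ 2 ∈ Icc (0 : ℝ) 1 := by
  have h1 : p ^ 2 / ((n : ℝ) + 1) ^ 2 ≤ 1 := by
    rw [div_le_one (by positivity)]
    have : (0 : ℝ) ≤ n := n.cast_nonneg
    exact pow_le_pow_left₀ hp.1.le (by linarith [hp.2]) 2
  have h2 : 0 ≤ p ^ 2 / ((n : ℝ) + 1) ^ 2 := by positivity
  exact ⟨by linarith, by linarith⟩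

lemma eulerSinProd_mem {p : ℝ} (hp : p ∈ Ioo (0 : ℝ) 1) (n : ℕ) :
    eulerSinProd p n ∈ Icc (0 : ℝ) 1 :=
  ⟨Finset.prod_nonneg fun j _ => (eulerSinProd_factor_mem hp j).1,
    Finset.prod_le_one (fun j _ => (eulerSinProd_factor_mem hp j).1)
      fun j _ => (eulerSinProd_factor_mem hp j).2⟩

/-- The power series coefficients of `F(-p, p; 1; t)`. -/
noncomputable def hypCoeff (p : ℝ) : ℕ → ℝ
  | 0 => 1
  | n + 1 => -p ^ 2 * (eulerSinProd p n / ((n : ℝ) + 1) ^ 2)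

lemma hyp_eq_tsum (p t : ℝ) : hyp (-p) p 1 t = ∑' n, hypCoeff p n * t ^ n := by
  refine tsum_congr fun n => ?_
  congr 1
  rcases n with _ | n
  · simp [hypCoeff]
  induction n with
  | zero => simp [hypCoeff, eulerSinProd_zero]; ring
  | succ n ih =>
    have hpos : (0 : ℝ) < ∏ i ∈ Finset.range (n + 1), (1 + (i : ℝ)) :=
      Finset.prod_pos fun i _ => by positivity
    have hfac : (0 : ℝ) < (n + 1).factorial := by positivity
    rw [Finset.prod_range_succ _ (n + 1), Finset.prod_range_succ _ (n + 1),
      Finset.prod_range_succ _ (n + 1), Nat.factorial_succ (n + 1), hypCoeff, eulerSinProd_succ]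
    rw [hypCoeff, div_eq_iff (by positivity)] at ih
    push_cast
    rw [div_eq_iff (by positivity)]
    set A := ∏ i ∈ Finset.range (n + 1), (-p + (i : ℝ))
    set B := ∏ i ∈ Finset.range (n + 1), (p + (i : ℝ))
    calc A * (-p + (n + 1)) * (B * (p + (n + 1)))
        = (A * B) * ((n + 1) ^ 2 - p ^ 2) := by ring
      _ = _ := by rw [ih]; field_simp; ring

lemma abs_hypCoeff_succ_le {p : ℝ} (hp : p ∈ Ioo (0 : ℝ) 1) (n : ℕ) :
    |hypCoeff p (n + 1)| ≤ 1 / ((n : ℝ) + 1) ^ 2 := by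
  obtain ⟨h0, h1⟩ := eulerSinProd_mem hp n
  have hp2 : p ^ 2 ≤ 1 := pow_le_one₀ hp.1.le hp.2.le
  rw [hypCoeff, neg_mul, abs_neg, abs_of_nonneg (by positivity)]
  calc p ^ 2 * (eulerSinProd p n / ((n : ℝ) + 1) ^ 2)
      ≤ 1 * (1 / ((n : ℝ) + 1) ^ 2) := by gcongr
    _ = _ := one_mul _

lemma abs_hypCoeff_le_one {p : ℝ} (hp : p ∈ Ioo (0 : ℝ) 1) (n : ℕ) : |hypCoeff p n| ≤ 1 := by
  rcases n with _ | n
  · simp [hypCoeff]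
  · refine (abs_hypCoeff_succ_le hp n).trans ?_
    rw [div_le_one (by positivity)]
    exact one_le_pow₀ (by linarith [n.cast_nonneg (α := ℝ)])

lemma summable_abs_hypCoeff {p : ℝ} (hp : p ∈ Ioo (0 : ℝ) 1) :
    Summable fun n => |hypCoeff p n| := by
  rw [← summable_nat_add_iff 1]
  refine Summable.of_nonneg_of_le (fun _ => abs_nonneg _) (abs_hypCoeff_succ_le hp) ?_
  have := (summable_nat_add_iff 1).2 (Real.summable_one_div_nat_pow.2 one_lt_two)
  exact_mod_cast this

lemma sum_range_succ_hypCoeff (p : ℝ) (n : ℕ) :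
    ∑ i ∈ Finset.range (n + 1), hypCoeff p i = eulerSinProd p n := by
  induction n with
  | zero => simp [hypCoeff, eulerSinProd_zero]
  | succ n ih =>
    rw [Finset.sum_range_succ, ih, eulerSinProd_succ, hypCoeff]
    ring

lemma hyp_neg_self_one {p : ℝ} (hp : p ∈ Ioo (0 : ℝ) 1) :
    hyp (-p) p 1 1 = sin (π * p) / (π * p) := by
  have h1 := (tendsto_add_atTop_iff_nat 1).2 (summable_abs_hypCoeff hp).of_abs.hasSum.tendsto_sum_nat
  simp only [sum_range_succ_hypCoeff] at h1
  have h2 := (Real.tendsto_euler_sin_prod p).div_const (π * p)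
  have hne : π * p ≠ 0 := (mul_pos pi_pos hp.1).ne'
  rw [hyp_eq_tsum]
  simp only [one_pow, mul_one]
  refine tendsto_nhds_unique h1 (h2.congr fun n => ?_)
  rw [mul_div_cancel_left₀ _ hne, eulerSinProd]

lemma continuousOn_hyp_neg_self {p : ℝ} (hp : p ∈ Ioo (0 : ℝ) 1) :
    ContinuousOn (hyp (-p) p 1) (Icc 0 1) := by
  have h : ContinuousOn (fun t : ℝ => ∑' n, hypCoeff p n * t ^ n) (Icc 0 1) := by
    refine continuousOn_tsum (fun n => by fun_prop) (summable_abs_hypCoeff hp) fun n t ht => ?_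
    rw [Real.norm_eq_abs, abs_mul, abs_pow]
    refine mul_le_of_le_one_right (abs_nonneg _) (pow_le_one₀ (abs_nonneg t) ?_)
    rw [abs_of_nonneg ht.1]
    exact ht.2
  exact h.congr fun t _ => hyp_eq_tsum p t

/-- The power series coefficients of `F(1 - p, 1 + p; 2; t)`. -/
noncomputable def derivCoeff (p : ℝ) (n : ℕ) : ℝ := eulerSinProd p n / ((n : ℝ) + 1)

lemma derivCoeff_nonneg {p : ℝ} (hp : p ∈ Ioo (0 : ℝ) 1) (n : ℕ) : 0 ≤ derivCoeff p n :=
  div_nonneg (eulerSinProd_mem hp n).1 (by positivity)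

lemma abs_derivCoeff_le_one {p : ℝ} (hp : p ∈ Ioo (0 : ℝ) 1) (n : ℕ) : |derivCoeff p n| ≤ 1 := by
  rw [abs_of_nonneg (derivCoeff_nonneg hp n), derivCoeff, div_le_one (by positivity)]
  linarith [(eulerSinProd_mem hp n).2, n.cast_nonneg (α := ℝ)]

/-- `F(1 - p, 1 + p; 2; t)`, which is `-p⁻²` times the derivative of `F(-p, p; 1; t)`. -/
noncomputable def hypDeriv (p t : ℝ) : ℝ := ∑' n, derivCoeff p n * t ^ n

/-- The derivative of `hypDeriv p`. -/
noncomputable def hypDeriv₂ (p t : ℝ) : ℝ := ∑' n : ℕ, ((n + 1) * derivCoeff p (n + 1)) * t ^ n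

lemma hypDeriv_zero (p : ℝ) : hypDeriv p 0 = 1 := by
  rw [hypDeriv, tsum_eq_single 0 fun n hn => by simp [hn]]
  simp [derivCoeff, eulerSinProd_zero]

lemma hasDerivAt_hyp_neg_self {p t : ℝ} (hp : p ∈ Ioo (0 : ℝ) 1) (ht : |t| < 1) :
    HasDerivAt (hyp (-p) p 1) (-p ^ 2 * hypDeriv p t) t := by
  have h := hasDerivAt_tsum_mul_pow_s18 (abs_hypCoeff_le_one hp) ht
  rw [show hyp (-p) p 1 = fun t => ∑' n, hypCoeff p n * t ^ n from funext (hyp_eq_tsum p)]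
  refine h.congr_deriv ?_
  rw [hypDeriv, ← tsum_mul_left]
  refine tsum_congr fun n => ?_
  rw [hypCoeff, derivCoeff]
  field_simp

lemma hasDerivAt_hypDeriv {p t : ℝ} (hp : p ∈ Ioo (0 : ℝ) 1) (ht : |t| < 1) :
    HasDerivAt (hypDeriv p) (hypDeriv₂ p t) t :=
  hasDerivAt_tsum_mul_pow_s18 (abs_derivCoeff_le_one hp) ht

/-- Euler's transformation of `F(2 - p, 2 + p; 3; t)`, written as a power series. -/
lemma hasSum_one_sub_mul_hypDeriv₂ {p t : ℝ} (hp : p ∈ Ioo (0 : ℝ) 1) (ht : |t| < 1) :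
    HasSum (fun n : ℕ => derivCoeff p n * ((1 - p ^ 2) / (n + 2)) * t ^ n)
      ((1 - t) * hypDeriv₂ p t) := by
  have hc := abs_derivCoeff_le_one hp
  have h1 := (summable_succ_mul_mul_pow hc ht).hasSum
  have hs := summable_nat_mul_mul_pow hc ht
  have h2 : ∑' n : ℕ, (n * derivCoeff p n) * t ^ n = t * hypDeriv₂ p t := by
    rw [hs.tsum_eq_zero_add, hypDeriv₂, ← tsum_mul_left]
    simp only [Nat.cast_zero, zero_mul, zero_add]
    refine tsum_congr fun n => ?_
    push_cast
    ring
  have h3 := h1.sub hs.hasSum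
  rw [h2] at h3
  have hcoeff : (fun n : ℕ => derivCoeff p n * ((1 - p ^ 2) / (n + 2)) * t ^ n) = fun n : ℕ =>
      (n + 1) * derivCoeff p (n + 1) * t ^ n - n * derivCoeff p n * t ^ n := by
    funext n
    rw [derivCoeff, derivCoeff, eulerSinProd_succ]
    push_cast
    have : (n : ℝ) + 1 + 1 ≠ 0 := by positivity
    field_simp
    ring
  rw [hcoeff, show (1 - t) * hypDeriv₂ p t = hypDeriv₂ p t - t * hypDeriv₂ p t by ring]
  exact h3

lemma le_one_sub_mul_hypDeriv₂ {p t : ℝ} (hp : p ∈ Ioo (0 : ℝ) 1) (ht : t ∈ Ico (0 : ℝ) 1) :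
    (1 - p ^ 2) / 2 ≤ (1 - t) * hypDeriv₂ p t := by
  have h := hasSum_one_sub_mul_hypDeriv₂ hp (by rw [abs_of_nonneg ht.1]; exact ht.2)
  have hp2 : 0 ≤ 1 - p ^ 2 := by nlinarith [hp.1, hp.2]
  have := le_hasSum h 0 fun n _ =>
    mul_nonneg (mul_nonneg (derivCoeff_nonneg hp n) (div_nonneg hp2 (by positivity)))
      (pow_nonneg ht.1 n)
  simpa [derivCoeff, eulerSinProd_zero] using this

lemma le_hypDeriv_sub_one_sub_mul_hypDeriv₂ {p t : ℝ} (hp : p ∈ Ioo (0 : ℝ) 1)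
    (ht : t ∈ Ico (0 : ℝ) 1) :
    3 / 4 - 9 / 8 * (1 - p ^ 2) ≤ 3 / 4 * hypDeriv p t - 9 / 4 * ((1 - t) * hypDeriv₂ p t) := by
  have hta : |t| < 1 := by rw [abs_of_nonneg ht.1]; exact ht.2
  have h := ((summable_mul_pow_of_abs_le_one (abs_derivCoeff_le_one hp) hta).hasSum.mul_left
    (3 / 4)).sub ((hasSum_one_sub_mul_hypDeriv₂ hp hta).mul_left (9 / 4))
  have := le_hasSum h 0 fun n hn => by
    have hn1 : (1 : ℝ) ≤ n := by exact_mod_cast Nat.one_le_iff_ne_zero.2 hn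
    have hle : (1 - p ^ 2) / (n + 2) ≤ 1 / 3 := by
      rw [div_le_iff₀ (by positivity)]
      nlinarith [hp.1]
    have hnn : 0 ≤ derivCoeff p n * t ^ n :=
      mul_nonneg (derivCoeff_nonneg hp n) (pow_nonneg ht.1 n)
    nlinarith [mul_le_mul_of_nonneg_left hle hnn]
  simp [derivCoeff, eulerSinProd_zero] at this
  rw [hypDeriv]
  simp only [derivCoeff]
  linarith

section Comparison

variable {p q : ℝ}

/-- If `D(x) = F(-q, q; 1; 1 - x³) - F(-p, p; 1; 1 - x²)` then `D'(x) = -2 x * diffSlope p q x`. -/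
noncomputable def diffSlope (p q x : ℝ) : ℝ :=
  p ^ 2 * hypDeriv p (1 - x ^ 2) - 3 / 2 * q ^ 2 * x * hypDeriv q (1 - x ^ 3)

lemma one_sub_pow_mem {x : ℝ} (hx : x ∈ Ioc (0 : ℝ) 1) (n : ℕ) : 1 - x ^ n ∈ Ico (0 : ℝ) 1 :=
  ⟨by linarith [pow_le_one₀ hx.1.le hx.2 (n := n)], by linarith [pow_pos hx.1 n]⟩

lemma abs_one_sub_pow_lt {x : ℝ} (hx : x ∈ Ioc (0 : ℝ) 1) (n : ℕ) : |1 - x ^ n| < 1 := by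
  rw [abs_of_nonneg (one_sub_pow_mem hx n).1]
  exact (one_sub_pow_mem hx n).2

lemma hasDerivAt_one_sub_pow (n : ℕ) (x : ℝ) :
    HasDerivAt (fun x : ℝ => 1 - x ^ n) (-(n * x ^ (n - 1))) x :=
  (hasDerivAt_pow n x).const_sub 1

lemma hasDerivAt_hyp_sub_hyp (hp : p ∈ Ioo (0 : ℝ) 1) (hq : q ∈ Ioo (0 : ℝ) 1) (C : ℝ) {x : ℝ}
    (hx : x ∈ Ioc (0 : ℝ) 1) :
    HasDerivAt (fun x => hyp (-q) q 1 (1 - x ^ 3) - hyp (-p) p 1 (1 - x ^ 2) - C * (1 - x ^ 2))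
      (-2 * x * (diffSlope p q x - C)) x := by
  have h1 := (hasDerivAt_hyp_neg_self hq (abs_one_sub_pow_lt hx 3)).comp x
    (hasDerivAt_one_sub_pow 3 x)
  have h2 := (hasDerivAt_hyp_neg_self hp (abs_one_sub_pow_lt hx 2)).comp x
    (hasDerivAt_one_sub_pow 2 x)
  refine ((h1.sub h2).sub ((hasDerivAt_one_sub_pow 2 x).const_mul C)).congr_deriv ?_
  rw [diffSlope]
  push_cast
  ring

lemma hasDerivAt_diffSlope (hp : p ∈ Ioo (0 : ℝ) 1) (hq : q ∈ Ioo (0 : ℝ) 1) {x : ℝ}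
    (hx : x ∈ Ioc (0 : ℝ) 1) :
    HasDerivAt (diffSlope p q)
      (-2 * (p ^ 2 * (x * hypDeriv₂ p (1 - x ^ 2)) + q ^ 2 * (3 / 4 * hypDeriv q (1 - x ^ 3) -
        9 / 4 * ((1 - (1 - x ^ 3)) * hypDeriv₂ q (1 - x ^ 3))))) x := by
  have h1 := (hasDerivAt_hypDeriv hq (abs_one_sub_pow_lt hx 3)).comp x
    (hasDerivAt_one_sub_pow 3 x)
  have h2 := (hasDerivAt_hypDeriv hp (abs_one_sub_pow_lt hx 2)).comp x
    (hasDerivAt_one_sub_pow 2 x)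
  refine ((h2.const_mul (p ^ 2)).sub
    (((hasDerivAt_id x).const_mul (3 / 2 * q ^ 2)).mul h1)).congr_deriv ?_
  simp only [Function.comp, id]
  push_cast
  ring

lemma strictAntiOn_diffSlope (hp : p ∈ Ioo (0 : ℝ) 1) (hq : q ∈ Ioo (0 : ℝ) 1)
    (hpq : 3 / 8 * (q ^ 2 * (1 - 3 * q ^ 2)) < p ^ 2 * (1 - p ^ 2) / 2) :
    StrictAntiOn (diffSlope p q) (Ioc 0 1) := by
  refine strictAntiOn_of_deriv_neg (convex_Ioc 0 1)
    (fun x hx => (hasDerivAt_diffSlope hp hq hx).continuousAt.continuousWithinAt) fun x hx => ?_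
  rw [interior_Ioc] at hx
  have hx' : x ∈ Ioc (0 : ℝ) 1 := ⟨hx.1, hx.2.le⟩
  rw [(hasDerivAt_diffSlope hp hq hx').deriv]
  have h1 := le_one_sub_mul_hypDeriv₂ hp (one_sub_pow_mem hx' 2)
  have h2 := le_hypDeriv_sub_one_sub_mul_hypDeriv₂ hq (one_sub_pow_mem hx' 3)
  set K := hypDeriv₂ p (1 - x ^ 2)
  have hp2 : 0 < 1 - p ^ 2 := by nlinarith [hp.1, hp.2]
  have hxK : (1 - p ^ 2) / 2 ≤ x * K := by
    have hpos : 0 < x ^ 2 * K := by linarith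
    have hK : 0 < K := pos_of_mul_pos_right hpos (by positivity)
    have : 0 ≤ (1 - x) * (x * K) := mul_nonneg (by linarith [hx.2]) (mul_pos hx.1 hK).le
    linarith
  have h3 := mul_le_mul_of_nonneg_left hxK (sq_nonneg p)
  have h4 := mul_le_mul_of_nonneg_left h2 (sq_nonneg q)
  linarith

theorem hyp_sub_hyp_bounds (hp : p ∈ Ioo (0 : ℝ) 1) (hq : q ∈ Ioo (0 : ℝ) 1)
    (hpq : 3 / 8 * (q ^ 2 * (1 - 3 * q ^ 2)) < p ^ 2 * (1 - p ^ 2) / 2) {x : ℝ}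
    (hx : x ∈ Ioo (0 : ℝ) 1) :
    hyp (-p) p 1 (1 - x ^ 2) + (p ^ 2 - 3 / 2 * q ^ 2) * (1 - x ^ 2) < hyp (-q) q 1 (1 - x ^ 3) ∧
    hyp (-q) q 1 (1 - x ^ 3) < hyp (-p) p 1 (1 - x ^ 2) +
      (sin (π * q) / (π * q) - sin (π * p) / (π * p)) * (1 - x ^ 2) := by
  have hanti := strictAntiOn_diffSlope hp hq hpq
  have hd := fun C y (hy : y ∈ Ioc (0 : ℝ) 1) => hasDerivAt_hyp_sub_hyp hp hq C hy
  have hzero : ∀ r, hyp (-r) r 1 0 = 1 := fun r => by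
    rw [hyp_eq_tsum, tsum_eq_single 0 fun n hn => by simp [hn]]
    simp [hypCoeff]
  constructor
  · obtain ⟨ξ, hξ, h⟩ := exists_hasDerivAt_eq_slope _ _ hx.2
      (fun y hy => (hd (p ^ 2 - 3 / 2 * q ^ 2) y
        ⟨hx.1.trans_le hy.1, hy.2⟩).continuousAt.continuousWithinAt)
      (fun y hy => hd _ y ⟨hx.1.trans hy.1, hy.2.le⟩)
    have hξ0 : 0 < ξ := hx.1.trans hξ.1
    have hslope := hanti ⟨hξ0, hξ.2.le⟩ ⟨one_pos, le_rfl⟩ hξ.2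
    have h1 : diffSlope p q 1 = p ^ 2 - 3 / 2 * q ^ 2 := by
      simp [diffSlope, hypDeriv_zero]
    rw [h1] at hslope
    rw [eq_div_iff (by linarith [hx.2])] at h
    simp only [one_pow, sub_self, hzero] at h
    have : 0 < 2 * ξ * (diffSlope p q ξ - (p ^ 2 - 3 / 2 * q ^ 2)) * (1 - x) :=
      mul_pos (mul_pos (by positivity) (by linarith)) (by linarith [hx.2])
    linarith
  · set C := sin (π * q) / (π * q) - sin (π * p) / (π * p) with hC
    by_contra! hcon
    have hmaps : ∀ n : ℕ, MapsTo (fun y : ℝ => 1 - y ^ n) (Icc 0 1) (Icc 0 1) := fun n y hy =>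
      ⟨by linarith [pow_le_one₀ hy.1 hy.2 (n := n)], by linarith [pow_nonneg hy.1 n]⟩
    have hcont : ContinuousOn (fun y => hyp (-q) q 1 (1 - y ^ 3) - hyp (-p) p 1 (1 - y ^ 2) -
        C * (1 - y ^ 2)) (Icc 0 1) :=
      (((continuousOn_hyp_neg_self hq).comp (by fun_prop) (hmaps 3)).sub
        ((continuousOn_hyp_neg_self hp).comp (by fun_prop) (hmaps 2))).sub (by fun_prop)
    obtain ⟨ξ, hξ, h⟩ := exists_hasDerivAt_eq_slope _ _ hx.1
      (hcont.mono (Icc_subset_Icc_right hx.2.le))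
      (fun y hy => hd C y ⟨hy.1, (hy.2.trans hx.2).le⟩)
    obtain ⟨η, hη, h'⟩ := exists_hasDerivAt_eq_slope _ _ hx.2
      (hcont.mono (Icc_subset_Icc_left hx.1.le))
      (fun y hy => hd C y ⟨hx.1.trans hy.1, hy.2.le⟩)
    have hη0 : 0 < η := hx.1.trans hη.1
    have hslope := hanti ⟨hξ.1, (hξ.2.trans hx.2).le⟩ ⟨hη0, hη.2.le⟩ (hξ.2.trans hη.1)
    rw [eq_div_iff (by linarith [hx.2])] at h'
    rw [eq_div_iff (by linarith [hx.1])] at h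
    simp only [one_pow, sub_self, hzero, ne_eq, OfNat.ofNat_ne_zero, not_false_eq_true, zero_pow,
      sub_zero, hyp_neg_self_one hq, hyp_neg_self_one hp, mul_one, ← hC] at h h'
    have hξC : diffSlope p q ξ ≤ C := by
      by_contra! hlt
      have : 0 < 2 * ξ * (diffSlope p q ξ - C) * x :=
        mul_pos (mul_pos (by linarith [hξ.1]) (by linarith)) hx.1
      linarith
    have hηC : C ≤ diffSlope p q η := by
      by_contra! hlt
      have : 0 < 2 * η * (C - diffSlope p q η) * (1 - x) :=
        mul_pos (mul_pos (by linarith) (by linarith)) (by linarith [hx.2])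
      linarith
    linarith

end Comparison

/-- The defining equation of `a₀`, in terms of `u = (1 - a₀)²`, keeps `u` away from `1`. -/
lemma lt_of_four_mul_eq_one {u : ℝ} (hu : u < 1)
    (h : 4 * (u * (1 - u) * (1 + u) ^ 2) = 1) : u < 93 / 100 := by
  by_contra! hle
  have h1 : u * (1 - u) ≤ 93 / 100 * (7 / 100) := by nlinarith
  have h2 : 0 ≤ u * (1 - u) := mul_nonneg (by linarith) (by linarith)
  have h3 : u * (1 - u) * (1 + u) ^ 2 ≤ 24999 / 100000 := by
    have : 0 ≤ (u - 93 / 100) * (1 - u) := mul_nonneg (by linarith) (by linarith)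
    nlinarith [mul_nonneg this h2, mul_nonneg this (by linarith : (0 : ℝ) ≤ u)]
  linarith

lemma quadratic_comparison {u v : ℝ} (hu0 : 0 < u) (hu : u < 93 / 100) (hvu : v ≤ 2 / 3 * u) :
    3 / 8 * (v * (1 - 3 * v)) < u * (1 - u) / 2 := by
  rcases le_or_gt u (1 / 4) with h | h
  · have : 0 ≤ (2 / 3 * u - v) * (1 - 3 * v - 2 * u) :=
      mul_nonneg (by linarith) (by linarith)
    nlinarith
  · nlinarith [sq_nonneg (v - 1 / 6), mul_pos (sub_pos.2 h) (sub_pos.2 hu)]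

theorem stmt18 (a₀ a δ₄ : ℝ)
    (ha₀ : a₀ ∈ Ioo (0:ℝ) 1)
    (hroot : 4 * a₀ * (2 - a₀) * (1 - a₀) ^ 2 * (a₀ ^ 2 - 2 * a₀ + 2) ^ 2 = 1)
    (hmin : ∀ x ∈ Ioo (0:ℝ) 1,
      4 * x * (2 - x) * (1 - x) ^ 2 * (x ^ 2 - 2 * x + 2) ^ 2 = 1 → a₀ ≤ x)
    (ha : a ∈ Ioo a₀ 1)
    (hδ₄ : δ₄ = (Real.sqrt 6 / 3 - 1) * (1 - a)) :
    δ₄ < 0 ∧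
      ∀ x ∈ Ioo (0:ℝ) 1, ∀ δ ∈ Ioc (a - 1) δ₄,
        0 ≤ -(3/2) * (δ ^ 2 + 2 * (1 - a) * δ + (1 - a) ^ 2 / 3) ∧
        hyp (a - 1) (1 - a) 1 (1 - x ^ 2) +
            (-(3/2) * (δ ^ 2 + 2 * (1 - a) * δ + (1 - a) ^ 2 / 3)) * (1 - x ^ 2)
          < hyp (a - 1 - δ) (1 - a + δ) 1 (1 - x ^ 3) ∧
        hyp (a - 1 - δ) (1 - a + δ) 1 (1 - x ^ 3)
          < hyp (a - 1) (1 - a) 1 (1 - x ^ 2) +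
              ((1 / π) * (Real.sin (π * (a - δ)) / (1 - a + δ) - Real.sin (π * a) / (1 - a))) *
                (1 - x ^ 2) := by
  have ha1 : a < 1 := ha.2
  have hp0 : 0 < 1 - a := by linarith
  have hs0 : 0 ≤ √6 := Real.sqrt_nonneg 6
  have hs2 : √6 ^ 2 = 6 := Real.sq_sqrt (by norm_num)
  have hs3 : √6 < 3 := by nlinarith
  have hp : 1 - a ∈ Ioo (0 : ℝ) 1 := ⟨hp0, by linarith [ha.1, ha₀.1]⟩
  have hδ₄neg : δ₄ < 0 := by
    rw [hδ₄]
    exact mul_neg_of_neg_of_pos (by linarith) hp0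
  refine ⟨hδ₄neg, fun x hx δ hδ => ?_⟩
  have hq0 : 0 < 1 - a + δ := by linarith [hδ.1]
  have hq : 1 - a + δ ∈ Ioo (0 : ℝ) 1 := ⟨hq0, by linarith [hδ.2, hp.2]⟩
  have hqp : 1 - a + δ ≤ √6 / 3 * (1 - a) := by
    have := hδ.2
    rw [hδ₄] at this
    linarith
  have hvu : (1 - a + δ) ^ 2 ≤ 2 / 3 * (1 - a) ^ 2 :=
    (pow_le_pow_left₀ hq0.le hqp 2).trans_eq (by rw [mul_pow, div_pow, hs2]; ring)
  have hu₀ : (1 - a₀) ^ 2 < 93 / 100 :=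
    lt_of_four_mul_eq_one (by nlinarith [ha₀.1, ha₀.2]) (by linear_combination hroot)
  have hu : (1 - a) ^ 2 < 93 / 100 :=
    (pow_le_pow_left₀ hp0.le (by linarith [ha.1]) 2).trans_lt hu₀
  have hC : -(3/2) * (δ ^ 2 + 2 * (1 - a) * δ + (1 - a) ^ 2 / 3) =
      (1 - a) ^ 2 - 3 / 2 * (1 - a + δ) ^ 2 := by ring
  have hS : (1 / π) * (Real.sin (π * (a - δ)) / (1 - a + δ) - Real.sin (π * a) / (1 - a)) =
      sin (π * (1 - a + δ)) / (π * (1 - a + δ)) - sin (π * (1 - a)) / (π * (1 - a)) := by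
    rw [show π * (a - δ) = π - π * (1 - a + δ) by ring, show π * a = π - π * (1 - a) by ring,
      sin_pi_sub, sin_pi_sub]
    field_simp
  have hmain := hyp_sub_hyp_bounds hp hq
    (quadratic_comparison (by positivity) hu hvu) hx
  rw [hC, hS, show a - 1 - δ = -(1 - a + δ) by ring, show a - 1 = -(1 - a) by ring]
  exact ⟨by linarith, hmain⟩
end
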